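/- Let R be a commutative ring, S a multiplicative subset of R, let 0 → A →f B →g C → 0 be an S-exact sequence of R-modules, and let M be an R-module. Then for every integer n ≥ 1 there exists an R-linear map δ_n : Ext^{n-1}_R(M, C) → Ext^n_R(M, A) such that the sequence Ext^{n-1}_R(M, B) → Ext^{n-1}_R(M, C) →δ_n→ Ext^n_R(M, A) → Ext^n_R(M, B), whose remaining maps are the ones induced by g and f, is S-exact at Ext^{n-1}_R(M, C) and at Ext^n_R(M, A). -/

import Mathlib

open CategoryTheory

universe u

/-- The sequence `X --u--> Y --v--> Z` is `S`-exact at `Y`: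
there is `s ∈ S` with `s • ker v ⊆ im u` and `s • im u ⊆ ker v`. -/
def SExactAt {R : Type u} [CommRing R] (S : Submonoid R) {X Y Z : Type*}
    [Zero Y] [SMul R Y] [Zero Z] (u : X → Y) (v : Y → Z) : Prop :=
  ∃ s ∈ S, (∀ y : Y, v y = 0 → ∃ x : X, s • y = u x) ∧ ∀ x : X, v (s • u x) = 0

/-!
Up to `S`-isomorphisms, i.e. morphisms invertible up to a scalar of `S`, an `S`-exact sequence
`0 ⟶ A ⟶ B ⟶ C ⟶ 0` is the honest short exact sequence `0 ⟶ ker g ⟶ B ⟶ im g ⟶ 0`. Linear functors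
preserve `S`-isomorphisms, and replacing the terms of an `S`-exact sequence of modules by
`S`-isomorphic ones keeps it `S`-exact. Since `Ext` is linear in its second variable, the long exact
sequence attached to `0 ⟶ ker g ⟶ B ⟶ im g ⟶ 0` therefore gives the one for `A`, `B` and `C`.
-/

universe v u'

open Limits Opposite

section SIso

variable {R : Type*} [CommRing R] {S : Submonoid R}
  {𝒞 : Type*} [Category* 𝒞] [Preadditive 𝒞] [Linear R 𝒞] {X Y Z : 𝒞}

variable (S) in
/-- A morphism is `S`-zero if some element of `S` annihilates it; for modules this says that its
image is uniformly `S`-torsion. -/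
def IsSZero (φ : X ⟶ Y) : Prop :=
  ∃ s ∈ S, s • φ = 0

lemma IsSZero.precomp {φ : Y ⟶ Z} (h : IsSZero S φ) (χ : X ⟶ Y) : IsSZero S (χ ≫ φ) := by
  obtain ⟨s, hs, h⟩ := h
  exact ⟨s, hs, by rw [← Linear.comp_smul, h, comp_zero]⟩

lemma IsSZero.postcomp {φ : X ⟶ Y} (h : IsSZero S φ) (χ : Y ⟶ Z) : IsSZero S (φ ≫ χ) := by
  obtain ⟨s, hs, h⟩ := h
  exact ⟨s, hs, by rw [← Linear.smul_comp, h, zero_comp]⟩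

variable (S) in
/-- An `S`-isomorphism: a morphism that is invertible up to a scalar of `S`. -/
def IsSIso (φ : X ⟶ Y) : Prop :=
  ∃ s ∈ S, ∃ ψ : Y ⟶ X, φ ≫ ψ = s • 𝟙 X ∧ ψ ≫ φ = s • 𝟙 Y

variable (X) in
lemma isSIso_id : IsSIso S (𝟙 X) :=
  ⟨1, S.one_mem, 𝟙 X, by rw [Category.id_comp, one_smul], by rw [Category.id_comp, one_smul]⟩

lemma IsSIso.comp {φ : X ⟶ Y} {χ : Y ⟶ Z} (hφ : IsSIso S φ) (hχ : IsSIso S χ) :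
    IsSIso S (φ ≫ χ) := by
  obtain ⟨s, hs, φ', hφφ', hφ'φ⟩ := hφ
  obtain ⟨t, ht, χ', hχχ', hχ'χ⟩ := hχ
  refine ⟨s * t, S.mul_mem hs ht, χ' ≫ φ', ?_, ?_⟩
  · simp [reassoc_of% hχχ', hφφ', smul_smul, mul_comm]
  · simp [reassoc_of% hφ'φ, hχ'χ, smul_smul]

lemma IsSIso.map {𝒟 : Type*} [Category* 𝒟] [Preadditive 𝒟] [Linear R 𝒟] (F : 𝒞 ⥤ 𝒟)
    [F.Linear R] {φ : X ⟶ Y} (hφ : IsSIso S φ) : IsSIso S (F.map φ) := by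
  obtain ⟨s, hs, ψ, hφψ, hψφ⟩ := hφ
  refine ⟨s, hs, F.map ψ, ?_, ?_⟩
  · rw [← F.map_comp, hφψ, F.map_smul, F.map_id]
  · rw [← F.map_comp, hψφ, F.map_smul, F.map_id]

lemma isSIso_of_comp_mono_eq_smul {i : X ⟶ Z} {j : Y ⟶ Z} [Mono i] [Mono j] {φ : X ⟶ Y}
    {ψ : Y ⟶ X} {s t : R} (hs : s ∈ S) (ht : t ∈ S) (hφ : φ ≫ j = s • i) (hψ : ψ ≫ i = t • j) :
    IsSIso S φ := by
  refine ⟨s * t, S.mul_mem hs ht, ψ, (cancel_mono i).1 ?_, (cancel_mono j).1 ?_⟩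
  · simp [hφ, hψ, smul_smul, mul_comm]
  · simp [hφ, hψ, smul_smul]

end SIso

section Abelian

variable {R : Type*} [CommRing R] {S : Submonoid R}
  {𝒞 : Type*} [Category* 𝒞] [Abelian 𝒞] [Linear R 𝒞] {X Y A B C : 𝒞}

lemma IsSZero.isSIso_of_epi {φ : X ⟶ Y} [Epi φ] (h : IsSZero S (kernel.ι φ)) : IsSIso S φ := by
  obtain ⟨s, hs, h⟩ := h
  have hs' : kernel.ι φ ≫ (s • 𝟙 X) = 0 := by
    simpa only [Linear.comp_smul, Category.comp_id] using h
  have hψ := Abelian.comp_epiDesc φ _ hs'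
  exact ⟨s, hs, Abelian.epiDesc φ _ hs', hψ, (cancel_epi φ).1 (by simp [reassoc_of% hψ])⟩

lemma IsSZero.isSIso_of_mono {φ : X ⟶ Y} [Mono φ] (h : IsSZero S (cokernel.π φ)) :
    IsSIso S φ := by
  obtain ⟨s, hs, h⟩ := h
  have hs' : (s • 𝟙 Y) ≫ cokernel.π φ = 0 := by
    simpa only [Linear.smul_comp, Category.id_comp] using h
  have hψ := Abelian.monoLift_comp φ _ hs'
  exact ⟨s, hs, Abelian.monoLift φ _ hs', (cancel_mono φ).1 (by simp [hψ]), hψ⟩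

lemma shortExact_kernel_image (g : B ⟶ C) :
    (ShortComplex.mk (kernel.ι g) (Abelian.factorThruImage g)
      ((cancel_mono (Abelian.image.ι g)).1 (by simp))).ShortExact :=
  ⟨ShortComplex.exact_of_f_is_kernel _
    (isKernelOfComp _ _ (kernelIsKernel g) _ (Abelian.image.fac g))⟩

variable (S) in
/-- An `S`-exact sequence `0 ⟶ A ⟶ B ⟶ C ⟶ 0` in a linear abelian category. Exactness at `A` and
at `C` is expressed by the kernel of `f` and the cokernel of `g`, and the inclusion of `ker g`
in `im f` by the vanishing of the composite `ker g ⟶ B ⟶ coker f`, each up to a scalar of `S`. -/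
structure ShortSExact (f : A ⟶ B) (g : B ⟶ C) : Prop where
  kernel_ι : IsSZero S (kernel.ι f)
  comp : IsSZero S (f ≫ g)
  kernel_ι_comp_cokernel_π : IsSZero S (kernel.ι g ≫ cokernel.π f)
  cokernel_π : IsSZero S (cokernel.π g)

namespace ShortSExact

variable {f : A ⟶ B} {g : B ⟶ C}

lemma isSIso_factorThruImage (h : ShortSExact S f g) : IsSIso S (Abelian.factorThruImage f) := by
  have hι : kernel.ι (Abelian.factorThruImage f) ≫ f = 0 := by
    simpa only [Abelian.image.fac, zero_comp] using
      kernel.condition_assoc (Abelian.factorThruImage f) (Abelian.image.ι f)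
  refine IsSZero.isSIso_of_epi ?_
  rw [← kernel.lift_ι f _ hι]
  exact h.kernel_ι.precomp _

lemma isSIso_image_ι (h : ShortSExact S f g) : IsSIso S (Abelian.image.ι g) := by
  have hπ : g ≫ cokernel.π (Abelian.image.ι g) = 0 := by
    simpa only [← Category.assoc, Abelian.image.fac, comp_zero] using
      Abelian.factorThruImage g ≫= cokernel.condition (Abelian.image.ι g)
  refine IsSZero.isSIso_of_mono ?_
  rw [← cokernel.π_desc g _ hπ]
  exact h.cokernel_π.postcomp _

lemma exists_isSIso_comp_kernel_ι (h : ShortSExact S f g) :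
    ∃ φ : A ⟶ kernel g, IsSIso S φ ∧ ∃ t ∈ S, φ ≫ kernel.ι g = t • f := by
  obtain ⟨t, ht, hfg⟩ := h.comp
  obtain ⟨t', ht', hgf⟩ := h.kernel_ι_comp_cokernel_π
  have h_image : (t • Abelian.image.ι f) ≫ g = 0 := by
    rw [← cancel_epi (Abelian.factorThruImage f), comp_zero]
    simpa using hfg
  let m : Abelian.image f ⟶ kernel g := kernel.lift g (t • Abelian.image.ι f) h_image
  let l : kernel g ⟶ Abelian.image f :=
    kernel.lift (cokernel.π f) (t' • kernel.ι g) (by simpa using hgf)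
  have hm : m ≫ kernel.ι g = t • Abelian.image.ι f := kernel.lift_ι _ _ _
  have hl : l ≫ Abelian.image.ι f = t' • kernel.ι g := kernel.lift_ι _ _ _
  exact ⟨Abelian.factorThruImage f ≫ m,
    h.isSIso_factorThruImage.comp (isSIso_of_comp_mono_eq_smul ht ht' hm hl), t, ht, by simp [hm]⟩

end ShortSExact

end Abelian

section ModuleCat

variable {R : Type u} [CommRing R] {S : Submonoid R} {X Y Z X' Y' Z' : ModuleCat.{v} R}
  {u : X ⟶ Y} {v : Y ⟶ Z} {u' : X' ⟶ Y'} {v' : Y' ⟶ Z'}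

lemma ShortSExact.of_moduleCat (hX : ∃ s ∈ S, ∀ x : X, u x = 0 → s • x = (0 : X))
    (hY : SExactAt S u v) (hZ : ∃ s ∈ S, ∀ z : Z, ∃ y : Y, s • z = v y) :
    ShortSExact S u v where
  kernel_ι := by
    obtain ⟨s, hs, h⟩ := hX
    refine ⟨s, hs, ?_⟩
    ext x
    exact h _ (kernel.condition_apply u x)
  comp := by
    obtain ⟨s, hs, -, h⟩ := hY
    refine ⟨s, hs, ?_⟩
    ext x
    exact (map_smul v.hom s (u x)).symm.trans (h x)
  kernel_ι_comp_cokernel_π := by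
    obtain ⟨s, hs, h, -⟩ := hY
    refine ⟨s, hs, ?_⟩
    ext y
    obtain ⟨x, hx⟩ := h _ (kernel.condition_apply v y)
    exact (map_smul (cokernel.π u).hom s (kernel.ι v y)).symm.trans
      ((congrArg (cokernel.π u) hx).trans (cokernel.condition_apply u x))
  cokernel_π := by
    obtain ⟨s, hs, h⟩ := hZ
    refine ⟨s, hs, ?_⟩
    ext z
    obtain ⟨y, hy⟩ := h z
    exact (map_smul (cokernel.π v).hom s z).symm.trans
      ((congrArg (cokernel.π v) hy).trans (cokernel.condition_apply v y))

lemma SExactAt.of_ker_of_im (h_ker : ∃ s ∈ S, ∀ y : Y, v y = 0 → ∃ x : X, s • y = u x)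
    (h_im : ∃ s ∈ S, ∀ x : X, s • v (u x) = 0) : SExactAt S u v := by
  obtain ⟨s, hs, h_ker⟩ := h_ker
  obtain ⟨t, ht, h_im⟩ := h_im
  refine ⟨t * s, S.mul_mem ht hs, fun y hy ↦ ?_, fun x ↦ ?_⟩
  · obtain ⟨x, hx⟩ := h_ker y hy
    exact ⟨t • x, by rw [mul_smul, hx, map_smul]⟩
  · rw [map_smul, mul_comm, mul_smul, h_im, smul_zero]

lemma SExactAt.of_exact (h : Function.Exact u v) : SExactAt S u v :=
  ⟨1, S.one_mem, fun y hy ↦ ((h y).1 hy).imp fun x hx ↦ by rw [one_smul, hx],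
    fun x ↦ by rw [one_smul, h.apply_apply_eq_zero]⟩

lemma SExactAt.of_isSIso (h : SExactAt S u v) {α : X ⟶ X'} {β : Y ⟶ Y'} {γ : Z ⟶ Z'}
    (hα : IsSIso S α) (hβ : IsSIso S β) (hγ : IsSIso S γ)
    (hu : ∃ r ∈ S, ∃ r' ∈ S, r • (α ≫ u') = r' • (u ≫ β))
    (hv : ∃ t ∈ S, ∃ t' ∈ S, t • (β ≫ v') = t' • (v ≫ γ)) : SExactAt S u' v' := by
  obtain ⟨e, he, h_ker, h_im⟩ := h
  obtain ⟨a, ha, α', -, hα⟩ := hα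
  obtain ⟨b, hb, β', -, hβ⟩ := hβ
  obtain ⟨c, hc, γ', hγ, -⟩ := hγ
  obtain ⟨r, hr, r', hr', hu⟩ := hu
  obtain ⟨t, ht, t', ht', hv⟩ := hv
  replace hu (x : X) : r • u' (α x) = r' • β (u x) := congr($hu x)
  replace hv (y : Y) : t • v' (β y) = t' • γ (v y) := congr($hv y)
  replace hα (x : X') : α (α' x) = a • x := congr($hα x)
  replace hβ (y : Y') : β (β' y) = b • y := congr($hβ y)
  replace hγ (z : Z) : γ' (γ z) = c • z := congr($hγ z)
  refine .of_ker_of_im ⟨r' * (e * (t' * c)) * b, ?_, fun y hy ↦ ?_⟩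
    ⟨e * t * r * a, ?_, fun x ↦ ?_⟩
  · exact S.mul_mem (S.mul_mem hr' (S.mul_mem he (S.mul_mem ht' hc))) hb
  · have hvy : v ((t' * c) • β' y) = 0 := calc
      v ((t' * c) • β' y) = t' • c • v (β' y) := by rw [map_smul, mul_smul]
      _ = γ' (t' • γ (v (β' y))) := by rw [map_smul, hγ]
      _ = 0 := by rw [← hv, hβ, map_smul, map_smul, hy, smul_zero, map_zero, smul_zero]
    obtain ⟨x, hx⟩ := h_ker _ hvy
    refine ⟨r • α x, ?_⟩
    calc (r' * (e * (t' * c)) * b) • y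
      _ = r' • β (e • (t' * c) • β' y) := by
        rw [map_smul, map_smul, hβ]; simp only [mul_smul]
      _ = u' (r • α x) := by rw [hx, ← hu, map_smul]
  · exact S.mul_mem (S.mul_mem (S.mul_mem he ht) hr) ha
  · calc (e * t * r * a) • v' (u' x)
      _ = (e * t) • v' (r • u' (α (α' x))) := by
        rw [hα, map_smul, map_smul, map_smul]; simp only [mul_smul]
      _ = (e * r') • t • v' (β (u (α' x))) := by
        rw [hu, map_smul, smul_smul, smul_smul, mul_right_comm]
      _ = (r' * t') • γ (v (e • u (α' x))) := by
        rw [hv, map_smul, map_smul, smul_smul, smul_smul]; congr 1; ring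
      _ = 0 := by rw [h_im, map_zero, smul_zero]

end ModuleCat

section ConnectingMaps

variable {R : Type u} [CommRing R] {𝒞 : Type*} [Category* 𝒞]

/-- Two functors to modules that behave like consecutive terms `Hⁿ`, `Hⁿ⁺¹` of a cohomological
`δ`-functor around the connecting maps; naturality of these maps is not required. -/
def HasConnectingMaps [HasZeroMorphisms 𝒞] (F F' : 𝒞 ⥤ ModuleCat.{v} R) : Prop :=
  ∀ ⦃T : ShortComplex 𝒞⦄, T.ShortExact → ∃ δ : F.obj T.X₃ ⟶ F'.obj T.X₁,
    Function.Exact (F.map T.g) δ ∧ Function.Exact δ (F'.map T.f)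

lemma HasConnectingMaps.of_iso [HasZeroMorphisms 𝒞] {F F' G G' : 𝒞 ⥤ ModuleCat.{v} R}
    (h : HasConnectingMaps G G') (e : F ≅ G) (e' : F' ≅ G') : HasConnectingMaps F F' := by
  intro T hT
  obtain ⟨δ, exact₃, exact₁⟩ := h hT
  have comm_δ : e.hom.app T.X₃ ≫ δ =
      (e.hom.app T.X₃ ≫ δ ≫ e'.inv.app T.X₁) ≫ e'.hom.app T.X₁ := by
    simp only [Category.assoc, Iso.inv_hom_id_app, Category.comp_id]
  exact ⟨e.hom.app T.X₃ ≫ δ ≫ e'.inv.app T.X₁,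
    (Function.Exact.iff_of_ladder_linearEquiv (e₁ := (e.app T.X₂).toLinearEquiv)
      (e₂ := (e.app T.X₃).toLinearEquiv) (e₃ := (e'.app T.X₁).toLinearEquiv)
      congr(($(e.hom.naturality T.g)).hom).symm congr(($comm_δ).hom)).1 exact₃,
    (Function.Exact.iff_of_ladder_linearEquiv (e₁ := (e.app T.X₃).toLinearEquiv)
      (e₂ := (e'.app T.X₁).toLinearEquiv) (e₃ := (e'.app T.X₂).toLinearEquiv)
      congr(($comm_δ).hom) congr(($(e'.hom.naturality T.f)).hom).symm).1 exact₁⟩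

lemma HasConnectingMaps.exists_sExactAt [Abelian 𝒞] [Linear R 𝒞] {F F' : 𝒞 ⥤ ModuleCat.{v} R}
    [F.Linear R] [F'.Linear R] (hF : HasConnectingMaps F F') {S : Submonoid R} {A B C : 𝒞}
    {f : A ⟶ B} {g : B ⟶ C} (h : ShortSExact S f g) :
    ∃ δ : F.obj C ⟶ F'.obj A, SExactAt S (F.map g) δ ∧ SExactAt S δ (F'.map f) := by
  obtain ⟨φ, ⟨a, ha, ψ, hφψ, hψφ⟩, t, ht, hφ⟩ := h.exists_isSIso_comp_kernel_ι
  obtain ⟨r, hr, χ, hjχ, -⟩ := h.isSIso_image_ι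
  obtain ⟨δ, exact₃, exact₁⟩ := hF (shortExact_kernel_image g)
  have hψ : IsSIso S ψ := ⟨a, ha, φ, hψφ, hφψ⟩
  have comm_g : (1 : R) • (𝟙 _ ≫ F.map g) =
      (1 : R) • (F.map (Abelian.factorThruImage g) ≫ F.map (Abelian.image.ι g)) := by
    rw [← F.map_comp, Category.id_comp, Abelian.image.fac]
  have comm_δ : (1 : R) • (F.map (Abelian.image.ι g) ≫ F.map χ ≫ δ ≫ F'.map ψ) =
      r • (δ ≫ F'.map ψ) := by
    rw [← F.map_comp_assoc, hjχ, F.map_smul, F.map_id, one_smul, Linear.smul_comp,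
      Category.id_comp]
  have comm_f : t • (F'.map ψ ≫ F'.map f) = a • (F'.map (kernel.ι g) ≫ 𝟙 _) := by
    rw [← F'.map_comp, ← F'.map_smul, ← Linear.comp_smul, ← hφ, reassoc_of% hψφ,
      Linear.smul_comp, F'.map_smul, Category.id_comp, Category.comp_id]
  exact ⟨F.map χ ≫ δ ≫ F'.map ψ,
    (SExactAt.of_exact exact₃).of_isSIso (isSIso_id _) (h.isSIso_image_ι.map F) (hψ.map F')
      ⟨1, S.one_mem, 1, S.one_mem, comm_g⟩ ⟨1, S.one_mem, r, hr, comm_δ⟩,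
    (SExactAt.of_exact exact₁).of_isSIso (h.isSIso_image_ι.map F) (hψ.map F') (isSIso_id _)
      ⟨1, S.one_mem, r, hr, comm_δ⟩ ⟨t, ht, a, ha, comm_f⟩⟩

end ConnectingMaps

section Homology

variable {𝒜 ι : Type*} [Category* 𝒜] [Preadditive 𝒜] [CategoryWithHomology 𝒜]

instance {R : Type*} [CommRing R] [Linear R 𝒜] (c : ComplexShape ι) (i : ι) :
    (HomologicalComplex.homologyFunctor 𝒜 c i).Linear R where
  map_smul φ r :=
    ShortComplex.homologyMap_smul ((HomologicalComplex.shortComplexFunctor 𝒜 c i).map φ) r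

lemma unop_homologyMap_comp_homologyUnop_inv {c : ComplexShape ι}
    {K L : HomologicalComplex 𝒜ᵒᵖ c} (φ : K ⟶ L) (i : ι) :
    (HomologicalComplex.homologyMap φ i).unop ≫ (K.homologyUnop i).inv =
      (L.homologyUnop i).inv ≫
        HomologicalComplex.homologyMap ((HomologicalComplex.unopFunctor 𝒜 c).map φ.op) i :=
  Quiver.Hom.op_inj (ShortComplex.homologyOpIso_inv_naturality
    ((HomologicalComplex.shortComplexFunctor 𝒜 c.symm i).map
      ((HomologicalComplex.unopFunctor 𝒜 c).map φ.op))).symm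

end Homology

section HomComplex

variable (R : Type u) [CommRing R] {𝒞 : Type u'} [Category.{v} 𝒞] [Abelian 𝒞] [Linear R 𝒞]
  {ι : Type*} [AddRightCancelSemigroup ι] [One ι]

/-- The functor `Y ↦ Hom(P, Y)`, with values in cochain complexes of modules; it describes how the
complex computing `Ext` from a projective resolution `P` depends on the second argument. -/
def homComplexFunctor (P : ChainComplex 𝒞 ι) : 𝒞 ⥤ CochainComplex (ModuleCat.{v} R) ι where
  obj Y := P.linearYonedaObj R Y
  map h :=
    { f i := ((linearCoyoneda R 𝒞).obj (op (P.X i))).map h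
      comm' i j _ := by
        ext (x : P.X i ⟶ _)
        exact (Category.assoc _ _ _).symm }
  map_id Y := by
    ext i : 1
    exact ((linearCoyoneda R 𝒞).obj (op (P.X i))).map_id Y
  map_comp h k := by
    ext i : 1
    exact ((linearCoyoneda R 𝒞).obj (op (P.X i))).map_comp h k

instance (P : ChainComplex 𝒞 ι) : (homComplexFunctor R P).Additive where
  map_add := by
    intros
    ext i (x : P.X i ⟶ _)
    exact Preadditive.comp_add _ _ _ _ _ _

instance (P : ChainComplex 𝒞 ι) : (homComplexFunctor R P).Linear R where
  map_smul h r := by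
    ext i (x : P.X i ⟶ _)
    exact Linear.comp_smul _ _ _ _ _ _

lemma shortExact_map_linearCoyoneda (P : 𝒞) [Projective P] {T : ShortComplex 𝒞}
    (hT : T.ShortExact) : (T.map ((linearCoyoneda R 𝒞).obj (op P))).ShortExact := by
  have := hT.mono_f
  have := hT.epi_g
  refine ModuleCat.shortComplex_shortExact _ (fun (x : P ⟶ T.X₂) ↦ ⟨?_, ?_⟩)
    (fun x y ↦ (cancel_mono T.f).1) fun x ↦ ⟨_, Projective.factorThru_comp x T.g⟩
  · exact fun hx ↦ ⟨_, hT.exact.lift_f x hx⟩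
  · rintro ⟨y : P ⟶ T.X₁, rfl⟩
    change (y ≫ T.f) ≫ T.g = 0
    rw [Category.assoc, T.zero, comp_zero]

lemma shortExact_map_homComplexFunctor (P : ChainComplex 𝒞 ι) [∀ i, Projective (P.X i)]
    {T : ShortComplex 𝒞} (hT : T.ShortExact) : (T.map (homComplexFunctor R P)).ShortExact :=
  HomologicalComplex.shortExact_of_degreewise_shortExact _ fun i ↦
    shortExact_map_linearCoyoneda R (P.X i) hT

variable [EnoughProjectives 𝒞]

lemma isoExt_hom_naturality {M : 𝒞} (P : ProjectiveResolution M) (n : ℕ) {Y Z : 𝒞} (h : Y ⟶ Z) :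
    ((Ext R 𝒞 n).obj (op M)).map h ≫ (P.isoExt n Z).hom =
      (P.isoExt n Y).hom ≫
        HomologicalComplex.homologyMap ((homComplexFunctor R P.complex).map h) n := by
  let K (Y : 𝒞) := (((linearYoneda R 𝒞).obj Y).rightOp.mapHomologicalComplex
    (ComplexShape.down ℕ)).obj P.complex
  let a (Y : 𝒞) : ((Ext R 𝒞 n).obj (op M)).obj Y ≅ unop ((K Y).homology n) :=
    (P.isoLeftDerivedObj ((linearYoneda R 𝒞).obj Y).rightOp n).unop.symm
  let ν := NatTrans.rightOp ((linearYoneda R 𝒞).map h)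
  let α : K Z ⟶ K Y := (NatTrans.mapHomologicalComplex ν _).app P.complex
  have hExt : ((Ext R 𝒞 n).obj (op M)).map h ≫ (a Z).hom =
      (a Y).hom ≫ (HomologicalComplex.homologyMap α n).unop :=
    (Iso.eq_comp_inv _).1 (congrArg Quiver.Hom.unop (P.leftDerived_app_eq ν n))
  have hUnop : (HomologicalComplex.homologyMap α n).unop ≫ ((K Z).homologyUnop n).inv =
      ((K Y).homologyUnop n).inv ≫
        HomologicalComplex.homologyMap ((homComplexFunctor R P.complex).map h) n :=
    unop_homologyMap_comp_homologyUnop_inv α n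
  exact ((reassoc_of% hExt) _).trans
    ((congrArg ((a Y).hom ≫ ·) hUnop).trans (Category.assoc _ _ _).symm)

/-- The computation of `Ext` from a projective resolution, as an isomorphism of functors in the
second variable. -/
noncomputable def extFunctorIso {M : 𝒞} (P : ProjectiveResolution M) (n : ℕ) :
    (Ext R 𝒞 n).obj (op M) ≅
      homComplexFunctor R P.complex ⋙ HomologicalComplex.homologyFunctor _ _ n :=
  NatIso.ofComponents (P.isoExt n) (isoExt_hom_naturality R P n)

instance (M : 𝒞) (n : ℕ) : ((Ext R 𝒞 n).obj (op M)).Linear R :=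
  Functor.linear_of_iso R (extFunctorIso R (projectiveResolution M) n).symm

lemma hasConnectingMaps_ext (M : 𝒞) (n : ℕ) :
    HasConnectingMaps ((Ext R 𝒞 n).obj (op M)) ((Ext R 𝒞 (n + 1)).obj (op M)) := by
  let P := projectiveResolution M
  refine HasConnectingMaps.of_iso (fun T hT ↦ ?_) (extFunctorIso R P n) (extFunctorIso R P (n + 1))
  have hP := shortExact_map_homComplexFunctor R P.complex hT
  have exact_iff {K : ShortComplex (ModuleCat.{v} R)} :=
    ShortComplex.ShortExact.moduleCat_exact_iff_function_exact K
  exact ⟨hP.δ n (n + 1) rfl, exact_iff.1 (hP.homology_exact₃ n (n + 1) rfl),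
    exact_iff.1 (hP.homology_exact₁ n (n + 1) rfl)⟩

end HomComplex

theorem stmt3_general {R : Type u} [CommRing R] {S : Submonoid R} {𝒞 : Type u'} [Category.{v} 𝒞]
    [Abelian 𝒞] [Linear R 𝒞] [EnoughProjectives 𝒞] {A B C : 𝒞} {f : A ⟶ B} {g : B ⟶ C}
    (h : ShortSExact S f g) (M : 𝒞) (n : ℕ) :
    ∃ δ : ((Ext R 𝒞 n).obj (op M)).obj C ⟶ ((Ext R 𝒞 (n + 1)).obj (op M)).obj A,
      SExactAt S (((Ext R 𝒞 n).obj (op M)).map g) δ ∧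
      SExactAt S δ (((Ext R 𝒞 (n + 1)).obj (op M)).map f) :=
  (hasConnectingMaps_ext R M n).exists_sExactAt h

/-- Given an `S`-exact sequence `0 → A → B → C → 0` and a module `M`, for every `n ≥ 1`
there is a connecting map `δₙ : Ext^{n-1}(M,C) → Ext^n(M,A)` making the sequence
`Ext^{n-1}(M,B) → Ext^{n-1}(M,C) → Ext^n(M,A) → Ext^n(M,B)` `S`-exact at the two
middle spots. -/
theorem stmt3 {R : Type u} [CommRing R] (S : Submonoid R)
    {A B C : ModuleCat.{u} R} (f : A ⟶ B) (g : B ⟶ C)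
    (hA : ∃ s ∈ S, ∀ x : A, f x = 0 → s • x = (0 : A))
    (hB : SExactAt S (⇑f) (⇑g))
    (hC : ∃ s ∈ S, ∀ c : C, ∃ b : B, s • c = g b)
    (M : ModuleCat.{u} R) :
    ∀ n : ℕ, 1 ≤ n →
      ∃ δ : ((Ext R (ModuleCat.{u} R) (n - 1)).obj (Opposite.op M)).obj C ⟶
            ((Ext R (ModuleCat.{u} R) n).obj (Opposite.op M)).obj A,
        SExactAt S (⇑(((Ext R (ModuleCat.{u} R) (n - 1)).obj (Opposite.op M)).map g)) (⇑δ) ∧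
        SExactAt S (⇑δ) (⇑(((Ext R (ModuleCat.{u} R) n).obj (Opposite.op M)).map f)) := by
  rintro (_ | n) hn
  · cases hn
  · exact stmt3_general (.of_moduleCat hA hB hC) M n
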